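/- (Theorem 3.3) The position vector of M satisfies Δ^{III} x = λ x on U for some real λ ≠ 0 if and only if M is part of a sphere centered at the origin, i.e. there is r > 0 with ‖x(u)‖ = r for all u ∈ U; moreover if Δ^{III} x = λ x with λ ≠ 0 then H/K is constant on U and λ x = −2(H/K) n. -/

import Mathlib

open Matrix

noncomputable section

/-- The parameter domain `ℝ²`. -/
abbrev Param : Type := Fin 2 → ℝ

/-- Vectors in Euclidean 3-space. -/
abbrev Vec3 : Type := Fin 3 → ℝ

/-- Partial derivative of a vector-valued function in the `i`-th coordinate direction. -/
noncomputable def pd (i : Fin 2) (f : Param → Vec3) (u : Param) : Vec3 :=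
  fderiv ℝ f u (Pi.single i 1)

/-- Partial derivative of a scalar function in the `i`-th coordinate direction. -/
noncomputable def pds (i : Fin 2) (f : Param → ℝ) (u : Param) : ℝ :=
  fderiv ℝ f u (Pi.single i 1)

/-- The Euclidean inner product on `ℝ³`. -/
def dot3 (a b : Vec3) : ℝ := ∑ k, a k * b k

/-- The Euclidean norm on `ℝ³`. -/
noncomputable def norm3 (a : Vec3) : ℝ := Real.sqrt (dot3 a a)

/-- The Gauss map `n = (x_{/1} × x_{/2}) / ‖x_{/1} × x_{/2}‖`. -/
noncomputable def gaussMap (x : Param → Vec3) (u : Param) : Vec3 :=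
  (norm3 (crossProduct (pd 0 x u) (pd 1 x u)))⁻¹ • crossProduct (pd 0 x u) (pd 1 x u)

/-- Components `g_{ij}` of the first fundamental form. -/
noncomputable def fformI (x : Param → Vec3) (u : Param) : Matrix (Fin 2) (Fin 2) ℝ :=
  Matrix.of fun i j => dot3 (pd i x u) (pd j x u)

/-- Components `b_{ij} = ⟨∂²x/∂u^i∂u^j, n⟩` of the second fundamental form. -/
noncomputable def fformII (x : Param → Vec3) (u : Param) : Matrix (Fin 2) (Fin 2) ℝ :=
  Matrix.of fun i j => dot3 (pd i (pd j x) u) (gaussMap x u)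

/-- Components `e_{ij} = ⟨n_{/i}, n_{/j}⟩` of the third fundamental form. -/
noncomputable def fformIII (x : Param → Vec3) (u : Param) : Matrix (Fin 2) (Fin 2) ℝ :=
  Matrix.of fun i j => dot3 (pd i (gaussMap x) u) (pd j (gaussMap x) u)

/-- The Gauss curvature `K = det(b_{ij}) / det(g_{ij})`. -/
noncomputable def gaussCurv (x : Param → Vec3) (u : Param) : ℝ :=
  (fformII x u).det / (fformI x u).det

/-- The mean curvature `H = (1/2) g^{ij} b_{ij}`. -/
noncomputable def meanCurv (x : Param → Vec3) (u : Param) : ℝ :=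
  (1 / 2) * ∑ i, ∑ j, (fformI x u)⁻¹ i j * fformII x u i j

/-- First Beltrami operator `∇^J(φ, ψ) = a^{ij} φ_{/i} ψ_{/j}` with respect to the
fundamental form with component matrix `a`, for scalar `φ` and `ℝ³`-valued `ψ`. -/
noncomputable def beltrami1 (a : Param → Matrix (Fin 2) (Fin 2) ℝ)
    (φ : Param → ℝ) (ψ : Param → Vec3) (u : Param) : Vec3 :=
  ∑ i, ∑ j, ((a u)⁻¹ i j * pds i φ u) • pd j ψ u

/-- Second Beltrami operator
`Δ^J f = −(1/√|det a|) ∂_i (√|det a| a^{ij} ∂_j f)` with respect to the fundamental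
form with component matrix `a`, acting componentwise on `ℝ³`-valued functions. -/
noncomputable def beltrami2 (a : Param → Matrix (Fin 2) (Fin 2) ℝ)
    (f : Param → Vec3) (u : Param) : Vec3 :=
  -((Real.sqrt |(a u).det|)⁻¹ •
    ∑ i, ∑ j, pd i (fun v => (Real.sqrt |(a v).det| * (a v)⁻¹ i j) • pd j f v) u)

/-- `x` is an immersion on `U`: the partial derivatives are linearly independent. -/
def Immersed (x : Param → Vec3) (U : Set Param) : Prop :=
  ∀ u ∈ U, LinearIndependent ℝ ![pd 0 x u, pd 1 x u]

/-- `f` is nonconstant on `U`. -/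
def NonconstOn (f : Param → Vec3) (U : Set Param) : Prop :=
  ¬ ∃ v : Vec3, ∀ u ∈ U, f u = v

/-! Auxiliary lemmas. -/

abbrev Sm {F : Type*} [NormedAddCommGroup F] [NormedSpace ℝ F] (f : Param → F) (u : Param) : Prop :=
  ContDiffAt ℝ ((⊤ : ℕ∞) : WithTop ℕ∞) f u

lemma Sm.diff {F : Type*} [NormedAddCommGroup F] [NormedSpace ℝ F] {f : Param → F} {u : Param}
    (h : Sm f u) : DifferentiableAt ℝ f u := ContDiffAt.differentiableAt h (by simp)

lemma Sm.comp_apply {f : Param → Vec3} {u : Param} (h : Sm f u) (k : Fin 3) :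
    Sm (fun v => f v k) u := (contDiffAt_pi.1 h) k

lemma sm_fderiv {F : Type*} [NormedAddCommGroup F] [NormedSpace ℝ F] {f : Param → F} {u : Param}
    (h : Sm f u) : Sm (fderiv ℝ f) u :=
  ContDiffAt.fderiv_right h (by simp)

lemma sm_pd {f : Param → Vec3} {u : Param} (h : Sm f u) (i : Fin 2) : Sm (pd i f) u :=
  ContDiffAt.clm_apply (sm_fderiv h) contDiffAt_const

lemma sm_dot {f g : Param → Vec3} {u : Param} (hf : Sm f u) (hg : Sm g u) :
    Sm (fun v => dot3 (f v) (g v)) u := by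
  unfold dot3
  exact ContDiffAt.sum fun k _ => (hf.comp_apply k).mul (hg.comp_apply k)

lemma cross_eq (a b : Vec3) : crossProduct a b =
    ![a 1 * b 2 - a 2 * b 1, a 2 * b 0 - a 0 * b 2, a 0 * b 1 - a 1 * b 0] := by
  rw [cross_apply]

lemma sm_cross {f g : Param → Vec3} {u : Param} (hf : Sm f u) (hg : Sm g u) :
    Sm (fun v => crossProduct (f v) (g v)) u := by
  simp only [cross_eq]
  refine contDiffAt_pi.2 fun k => ?_
  have h (i j : Fin 3) := (hf.comp_apply i).mul (hg.comp_apply j)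
  fin_cases k
  · exact (h 1 2).sub (h 2 1)
  · exact (h 2 0).sub (h 0 2)
  · exact (h 0 1).sub (h 1 0)

lemma pd_apply {f : Param → Vec3} {u : Param} (hf : Sm f u) (i : Fin 2) (k : Fin 3) :
    pd i f u k = pds i (fun v => f v k) u := by
  unfold pd pds
  rw [fderiv_apply hf.diff k]
  rfl

lemma pds_mul {f g : Param → ℝ} {u : Param} (hf : Sm f u) (hg : Sm g u) (i : Fin 2) :
    pds i (fun v => f v * g v) u = pds i f u * g u + f u * pds i g u := by
  unfold pds
  rw [fderiv_fun_mul hf.diff hg.diff]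
  simp; ring

lemma pds_sub {f g : Param → ℝ} {u : Param} (hf : Sm f u) (hg : Sm g u) (i : Fin 2) :
    pds i (fun v => f v - g v) u = pds i f u - pds i g u := by
  unfold pds
  rw [fderiv_fun_sub hf.diff hg.diff]
  simp

lemma pds_add {f g : Param → ℝ} {u : Param} (hf : Sm f u) (hg : Sm g u) (i : Fin 2) :
    pds i (fun v => f v + g v) u = pds i f u + pds i g u := by
  unfold pds
  rw [fderiv_fun_add hf.diff hg.diff]
  simp

lemma pd_add {f g : Param → Vec3} {u : Param} (hf : Sm f u) (hg : Sm g u) (i : Fin 2) :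
    pd i (fun v => f v + g v) u = pd i f u + pd i g u := by
  unfold pd
  rw [fderiv_fun_add hf.diff hg.diff]
  simp

lemma pd_csmul {f : Param → Vec3} {u : Param} (c : ℝ) (hf : Sm f u) (i : Fin 2) :
    pd i (fun v => c • f v) u = c • pd i f u := by
  unfold pd
  rw [fderiv_fun_const_smul hf.diff]
  simp

lemma pd_smul {f : Param → ℝ} {g : Param → Vec3} {u : Param} (hf : Sm f u) (hg : Sm g u)
    (i : Fin 2) :
    pd i (fun v => f v • g v) u = pds i f u • g u + f u • pd i g u := by
  unfold pd pds
  rw [fderiv_fun_smul hf.diff hg.diff]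
  simp [add_comm]

lemma pds_dot {f g : Param → Vec3} {u : Param} (hf : Sm f u) (hg : Sm g u) (i : Fin 2) :
    pds i (fun v => dot3 (f v) (g v)) u = dot3 (pd i f u) (g u) + dot3 (f u) (pd i g u) := by
  have h (k : Fin 3) := (hf.comp_apply k).mul (hg.comp_apply k)
  simp only [dot3, Fin.sum_univ_three]
  rw [pds_add ((h 0).add (h 1)) (h 2), pds_add (h 0) (h 1)]
  simp only [pds_mul (hf.comp_apply _) (hg.comp_apply _), pd_apply hf, pd_apply hg]
  ring

lemma pd_cross {f g : Param → Vec3} {u : Param} (hf : Sm f u) (hg : Sm g u) (i : Fin 2) :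
    pd i (fun v => crossProduct (f v) (g v)) u =
      crossProduct (pd i f u) (g u) + crossProduct (f u) (pd i g u) := by
  have h (i j : Fin 3) := (hf.comp_apply i).mul (hg.comp_apply j)
  ext k
  rw [pd_apply (sm_cross hf hg)]
  simp only [cross_eq]
  fin_cases k <;>
  simp [-mul_eq_mul_left_iff, -mul_eq_mul_right_iff, pds_sub (h _ _) (h _ _), pds_mul (hf.comp_apply _) (hg.comp_apply _), pd_apply hf, pd_apply hg] <;>
  ring

lemma pd_congr {f g : Param → Vec3} {u : Param} (h : f =ᶠ[nhds u] g) (i : Fin 2) :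
    pd i f u = pd i g u := by
  unfold pd; rw [h.fderiv_eq]

lemma pds_congr {f g : Param → ℝ} {u : Param} (h : f =ᶠ[nhds u] g) (i : Fin 2) :
    pds i f u = pds i g u := by
  unfold pds; rw [h.fderiv_eq]

lemma pds_const (c : ℝ) (u : Param) (i : Fin 2) : pds i (fun _ => c) u = 0 := by
  simp [pds]

lemma pd_symm {f : Param → Vec3} {u : Param} (hf : Sm f u) (i j : Fin 2) :
    pd i (pd j f) u = pd j (pd i f) u := by
  have h : IsSymmSndFDerivAt ℝ f u := ContDiffAt.isSymmSndFDerivAt hf (by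
    simp only [minSmoothness_of_isRCLikeNormedField]
    exact WithTop.coe_le_coe.2 (le_top : (2 : ℕ∞) ≤ ⊤))
  have key (i j : Fin 2) : pd i (pd j f) u =
      fderiv ℝ (fderiv ℝ f) u (Pi.single i 1) (Pi.single j 1) := by
    show fderiv ℝ (fun v => fderiv ℝ f v (Pi.single j 1)) u (Pi.single i 1) = _
    rw [fderiv_clm_apply (sm_fderiv hf).diff (differentiableAt_const _)]
    simp
  rw [key, key]
  exact h.eq _ _

lemma const_of_pds {U : Set Param} (hU : IsOpen U) (hc : IsConnected U) {f : Param → ℝ}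
    (hf : ∀ u ∈ U, Sm f u) (h : ∀ u ∈ U, ∀ i, pds i f u = 0) :
    ∃ c, ∀ u ∈ U, f u = c := by
  refine hU.exists_is_const_of_fderiv_eq_zero hc.isPreconnected
    (fun u hu => (hf u hu).diff.differentiableWithinAt) ?_
  intro u hu
  ext w
  have hw : w = w 0 • (Pi.single 0 1 : Param) + w 1 • (Pi.single 1 1 : Param) := by
    ext k; fin_cases k <;> simp
  have h0 := h u hu 0
  have h1 := h u hu 1
  unfold pds at h0 h1
  rw [hw, map_add, map_smul, map_smul, h0, h1]
  simp

/-! Pointwise algebra. -/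

lemma dot3_eq (a b : Vec3) : dot3 a b = a 0 * b 0 + a 1 * b 1 + a 2 * b 2 := by
  simp [dot3, Fin.sum_univ_three]

lemma vext {a b : Vec3} (h0 : a 0 = b 0) (h1 : a 1 = b 1) (h2 : a 2 = b 2) : a = b := by
  ext k; fin_cases k <;> assumption

lemma dot3_comm (a b : Vec3) : dot3 a b = dot3 b a := by
  simp only [dot3_eq]; ring

lemma dot3_smul_left (c : ℝ) (a b : Vec3) : dot3 (c • a) b = c * dot3 a b := by
  simp [dot3_eq]; ring

lemma dot3_smul_right (c : ℝ) (a b : Vec3) : dot3 a (c • b) = c * dot3 a b := by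
  simp [dot3_eq]; ring

lemma dot3_add_left (a b c : Vec3) : dot3 (a + b) c = dot3 a c + dot3 b c := by
  simp [dot3_eq]; ring

lemma dot3_add_right (a b c : Vec3) : dot3 a (b + c) = dot3 a b + dot3 a c := by
  simp [dot3_eq]; ring

lemma dot3_self_nonneg (a : Vec3) : 0 ≤ dot3 a a := by
  simp only [dot3_eq]; nlinarith [mul_self_nonneg (a 0), mul_self_nonneg (a 1), mul_self_nonneg (a 2)]

lemma dot3_self_eq_zero {a : Vec3} (h : dot3 a a = 0) : a = 0 := by
  simp only [dot3_eq] at h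
  apply vext <;> simp <;> nlinarith [mul_self_nonneg (a 0), mul_self_nonneg (a 1), mul_self_nonneg (a 2)]

lemma dot_cross_left (a b : Vec3) : dot3 a (crossProduct a b) = 0 := by
  simp [dot3_eq, cross_eq]; ring

lemma dot_cross_right (a b : Vec3) : dot3 b (crossProduct a b) = 0 := by
  simp [dot3_eq, cross_eq]; ring

/-- Tangent vectors: cross product is a multiple of the normal. -/
lemma cross_tangent {a b n : Vec3} (hn : dot3 n n = 1) (ha : dot3 a n = 0) (hb : dot3 b n = 0) :
    crossProduct a b = dot3 (crossProduct a b) n • n := by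
  simp only [dot3_eq] at *
  apply vext <;> simp [cross_eq]
  · linear_combination (-(a 1 * b 2 - a 2 * b 1)) * hn + (n 1 * b 2 - n 2 * b 1) * ha
      - (n 1 * a 2 - n 2 * a 1) * hb
  · linear_combination (-(a 2 * b 0 - a 0 * b 2)) * hn + (n 2 * b 0 - n 0 * b 2) * ha
      - (n 2 * a 0 - n 0 * a 2) * hb
  · linear_combination (-(a 0 * b 1 - a 1 * b 0)) * hn + (n 0 * b 1 - n 1 * b 0) * ha
      - (n 0 * a 1 - n 1 * a 0) * hb

/-- Cramer in the tangent plane. -/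
lemma tangent_expand {a b n y : Vec3} (hn : dot3 n n = 1) (ha : dot3 a n = 0) (hb : dot3 b n = 0)
    (hy : dot3 y n = 0) (hD : dot3 (crossProduct a b) n ≠ 0) :
    ∃ p q : ℝ, y = p • a + q • b := by
  have h1 := cross_tangent hn ha hb
  have h2 : dot3 (crossProduct a b) y = 0 := by
    rw [h1, dot3_smul_left, dot3_comm n y, hy, mul_zero]
  refine ⟨dot3 (crossProduct y b) n / dot3 (crossProduct a b) n,
    dot3 (crossProduct a y) n / dot3 (crossProduct a b) n, ?_⟩
  have key : dot3 (crossProduct a b) n • y = dot3 (crossProduct y b) n • a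
      + dot3 (crossProduct a y) n • b + dot3 (crossProduct a b) y • n := by
    apply vext <;> simp [dot3_eq, cross_eq] <;> ring
  rw [h2, zero_smul, add_zero] at key
  rw [div_eq_inv_mul, div_eq_inv_mul, mul_smul, mul_smul, ← smul_add, ← key, smul_smul,
    inv_mul_cancel₀ hD, one_smul]

lemma lagrange (a b c d : Vec3) : dot3 (crossProduct a b) (crossProduct c d) =
    dot3 a c * dot3 b d - dot3 a d * dot3 b c := by
  simp [dot3_eq, cross_eq]; ring

lemma cross_cross_left (a b c : Vec3) : crossProduct (crossProduct a b) c =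
    dot3 a c • b - dot3 b c • a := by
  apply vext <;> simp [dot3_eq, cross_eq] <;> ring

lemma csmul_cross (c : ℝ) (a b : Vec3) : c • crossProduct a b = crossProduct (c • a) b := by
  simp

/-! Regular points. -/

def Dd (x : Param → Vec3) (v : Param) : ℝ :=
  dot3 (crossProduct (pd 0 (gaussMap x) v) (pd 1 (gaussMap x) v)) (gaussMap x v)

def Ph (x : Param → Vec3) (v : Param) : ℝ :=
  (dot3 (crossProduct (pd 1 x v) (pd 0 (gaussMap x) v)) (gaussMap x v) -
   dot3 (crossProduct (pd 0 x v) (pd 1 (gaussMap x) v)) (gaussMap x v)) * (Dd x v)⁻¹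

structure Reg (x : Param → Vec3) (v : Param) : Prop where
  smx : Sm x v
  smn : Sm (gaussMap x) v
  nn : dot3 (gaussMap x v) (gaussMap x v) = 1
  Xn : ∀ i, dot3 (pd i x v) (gaussMap x v) = 0
  Nn : ∀ i, dot3 (pd i (gaussMap x) v) (gaussMap x v) = 0
  bII : ∀ i j, fformII x v i j = - dot3 (pd j x v) (pd i (gaussMap x) v)
  sym : dot3 (pd 0 x v) (pd 1 (gaussMap x) v) = dot3 (pd 1 x v) (pd 0 (gaussMap x) v)
  D0 : Dd x v ≠ 0
  G0 : dot3 (crossProduct (pd 0 x v) (pd 1 x v)) (gaussMap x v) ≠ 0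

lemma cross_pos {x : Param → Vec3} {u : Param} (h : LinearIndependent ℝ ![pd 0 x u, pd 1 x u]) :
    0 < dot3 (crossProduct (pd 0 x u) (pd 1 x u)) (crossProduct (pd 0 x u) (pd 1 x u)) := by
  refine lt_of_le_of_ne (dot3_self_nonneg _) fun h0 => ?_
  have := dot3_self_eq_zero h0.symm
  exact (crossProduct_ne_zero_iff_linearIndependent.2 h) this

lemma gauss_Xn (x : Param → Vec3) (u : Param) (i : Fin 2) :
    dot3 (pd i x u) (gaussMap x u) = 0 := by
  unfold gaussMap
  rw [dot3_smul_right]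
  fin_cases i
  · simp [dot_cross_left]
  · simp [dot_cross_right]

lemma gauss_nn {x : Param → Vec3} {u : Param} (h : LinearIndependent ℝ ![pd 0 x u, pd 1 x u]) :
    dot3 (gaussMap x u) (gaussMap x u) = 1 := by
  have hp := cross_pos h
  unfold gaussMap norm3
  rw [dot3_smul_left, dot3_smul_right, ← mul_assoc, ← mul_inv, Real.mul_self_sqrt hp.le,
    inv_mul_cancel₀ hp.ne']

lemma sm_gauss {x : Param → Vec3} {u : Param} (hx : Sm x u)
    (h : LinearIndependent ℝ ![pd 0 x u, pd 1 x u]) : Sm (gaussMap x) u := by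
  have hp := cross_pos h
  have hc := sm_cross (sm_pd hx 0) (sm_pd hx 1)
  unfold gaussMap norm3
  exact ((ContDiffAt.sqrt (sm_dot hc hc) hp.ne').inv (Real.sqrt_ne_zero'.2 hp)).smul hc

lemma reg_of {U : Set Param} {x : Param → Vec3} (hU : IsOpen U)
    (hx : ContDiffOn ℝ (⊤ : ℕ∞) x U) (himm : Immersed x U)
    (hpar : ∀ u ∈ U, (fformII x u).det ≠ 0) {u : Param} (hu : u ∈ U) : Reg x u := by
  have smx : ∀ v ∈ U, Sm x v := fun v hv => hx.contDiffAt (hU.mem_nhds hv)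
  have smn : ∀ v ∈ U, Sm (gaussMap x) v := fun v hv => sm_gauss (smx v hv) (himm v hv)
  have hev : ∀ᶠ v in nhds u, v ∈ U := hU.mem_nhds hu
  have nn := gauss_nn (himm u hu)
  have Nn : ∀ i, dot3 (pd i (gaussMap x) u) (gaussMap x u) = 0 := by
    intro i
    have h1 := pds_dot (smn u hu) (smn u hu) i
    rw [pds_congr (g := fun _ => (1 : ℝ)) (hev.mono fun v hv => gauss_nn (himm v hv)),
      pds_const, dot3_comm (gaussMap x u)] at h1
    linarith
  have bII : ∀ i j, fformII x u i j = - dot3 (pd j x u) (pd i (gaussMap x) u) := by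
    intro i j
    have h1 := pds_dot (sm_pd (smx u hu) j) (smn u hu) i
    rw [pds_congr (g := fun _ => (0 : ℝ)) (hev.mono fun v hv => gauss_Xn x v j),
      pds_const] at h1
    simp only [fformII, Matrix.of_apply]
    linarith
  have sym : dot3 (pd 0 x u) (pd 1 (gaussMap x) u) = dot3 (pd 1 x u) (pd 0 (gaussMap x) u) := by
    have h1 := bII 0 1
    have h2 := bII 1 0
    simp only [fformII, Matrix.of_apply] at h1 h2
    rw [pd_symm (smx u hu)] at h1
    linarith
  have hdet := hpar u hu
  have : (fformII x u).det = dot3 (crossProduct (pd 0 x u) (pd 1 x u)) (gaussMap x u) *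
      Dd x u := by
    have e1 := cross_tangent nn (gauss_Xn x u 0) (gauss_Xn x u 1)
    have e2 := cross_tangent nn (Nn 0) (Nn 1)
    have e3 := lagrange (pd 0 x u) (pd 1 x u) (pd 0 (gaussMap x) u) (pd 1 (gaussMap x) u)
    rw [e1, e2, dot3_smul_left, dot3_smul_right, nn, mul_one] at e3
    unfold Dd
    rw [e3, Matrix.det_fin_two]
    simp only [bII]
    ring
  rw [this] at hdet
  exact ⟨smx u hu, smn u hu, nn, gauss_Xn x u, Nn, bII, sym, right_ne_zero_of_mul hdet,
    left_ne_zero_of_mul hdet⟩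

namespace Reg
variable {x : Param → Vec3} {u : Param}

lemma smD (h : Reg x u) : Sm (Dd x) u :=
  sm_dot (sm_cross (sm_pd h.smn 0) (sm_pd h.smn 1)) h.smn

lemma smPh (h : Reg x u) : Sm (Ph x) u :=
  ((sm_dot (sm_cross (sm_pd h.smx 1) (sm_pd h.smn 0)) h.smn).sub
    (sm_dot (sm_cross (sm_pd h.smx 0) (sm_pd h.smn 1)) h.smn)).mul (h.smD.inv h.D0)

lemma NN (h : Reg x u) : crossProduct (pd 0 (gaussMap x) u) (pd 1 (gaussMap x) u) =
    Dd x u • gaussMap x u := cross_tangent h.nn (h.Nn 0) (h.Nn 1)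

lemma detE (h : Reg x u) : (fformIII x u).det = Dd x u ^ 2 := by
  have e3 := lagrange (pd 0 (gaussMap x) u) (pd 1 (gaussMap x) u)
    (pd 0 (gaussMap x) u) (pd 1 (gaussMap x) u)
  rw [h.NN, dot3_smul_left, dot3_smul_right, h.nn] at e3
  rw [Matrix.det_fin_two]
  simp only [fformIII, Matrix.of_apply]
  linarith

lemma expand (h : Reg x u) : ∃ α β γ δ : ℝ,
    pd 0 x u = α • pd 0 (gaussMap x) u + β • pd 1 (gaussMap x) u ∧
    pd 1 x u = γ • pd 0 (gaussMap x) u + δ • pd 1 (gaussMap x) u ∧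
    Ph x u = -(α + δ) := by
  obtain ⟨α, β, h1⟩ := tangent_expand h.nn (h.Nn 0) (h.Nn 1) (h.Xn 0) h.D0
  obtain ⟨γ, δ, h2⟩ := tangent_expand h.nn (h.Nn 0) (h.Nn 1) (h.Xn 1) h.D0
  refine ⟨α, β, γ, δ, h1, h2, ?_⟩
  have h0 := h.D0
  unfold Ph
  rw [← div_eq_mul_inv, div_eq_iff h0, h1, h2]
  simp [Dd, dot3_eq, cross_eq]
  ring

lemma twoHK (h : Reg x u) : 2 * (meanCurv x u / gaussCurv x u) = Ph x u := by
  obtain ⟨α, β, γ, δ, h1, h2, h3⟩ := h.expand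
  have hg : (fformI x u).det ≠ 0 := by
    have e3 := lagrange (pd 0 x u) (pd 1 x u) (pd 0 x u) (pd 1 x u)
    rw [cross_tangent h.nn (h.Xn 0) (h.Xn 1), dot3_smul_left, dot3_smul_right, h.nn] at e3
    rw [Matrix.det_fin_two]
    simp only [fformI, Matrix.of_apply]
    rw [← e3, mul_one]
    exact mul_ne_zero h.G0 h.G0
  have hb : (fformII x u).det ≠ 0 := by
    have e1 := cross_tangent h.nn (h.Xn 0) (h.Xn 1)
    have e3 := lagrange (pd 0 x u) (pd 1 x u) (pd 0 (gaussMap x) u) (pd 1 (gaussMap x) u)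
    rw [e1, h.NN, dot3_smul_left, dot3_smul_right, h.nn, mul_one] at e3
    have : (fformII x u).det = dot3 (crossProduct (pd 0 x u) (pd 1 x u)) (gaussMap x u) *
        Dd x u := by
      rw [e3, Matrix.det_fin_two]
      simp only [h.bII]
      ring
    rw [this]
    exact mul_ne_zero h.G0 h.D0
  have hm : meanCurv x u = (1 / 2) * ((fformI x u).det⁻¹ *
      (fformI x u 1 1 * fformII x u 0 0 - fformI x u 0 1 * fformII x u 0 1
        - fformI x u 1 0 * fformII x u 1 0 + fformI x u 0 0 * fformII x u 1 1)) := by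
    simp only [meanCurv, Fin.sum_univ_two, Matrix.inv_def, Matrix.adjugate_fin_two,
      Ring.inverse_eq_inv']
    simp
    ring
  have hmain : (fformI x u 1 1 * fformII x u 0 0 - fformI x u 0 1 * fformII x u 0 1
        - fformI x u 1 0 * fformII x u 1 0 + fformI x u 0 0 * fformII x u 1 1) =
        Ph x u * (fformII x u).det := by
    rw [h3, Matrix.det_fin_two]
    simp only [h.bII, fformI, Matrix.of_apply, h1, h2, dot3_add_left, dot3_add_right,
      dot3_smul_left, dot3_smul_right, dot3_comm (pd 1 (gaussMap x) u) (pd 0 (gaussMap x) u)]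
    ring
  rw [hm, hmain, gaussCurv]
  field_simp

/-- The fields `D² e^{ij} x_j`. -/
lemma A1 (h : Reg x u) :
    (Dd x u)⁻¹ • (dot3 (pd 1 (gaussMap x) u) (pd 1 (gaussMap x) u) • pd 0 x u
      - dot3 (pd 0 (gaussMap x) u) (pd 1 (gaussMap x) u) • pd 1 x u) =
    Ph x u • crossProduct (gaussMap x u) (pd 1 (gaussMap x) u)
      + crossProduct (gaussMap x u) (pd 1 x u) := by
  obtain ⟨α, β, γ, δ, h1, h2, h3⟩ := h.expand
  have hs := h.sym
  rw [inv_smul_eq_iff₀ h.D0, smul_add, smul_comm, csmul_cross (Dd x u), csmul_cross (Dd x u), ← h.NN, cross_cross_left, cross_cross_left, h3, h1, h2]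
  rw [h1, h2] at hs
  simp only [dot3_add_left, dot3_add_right, dot3_smul_left, dot3_smul_right,
    dot3_comm (pd 1 (gaussMap x) u) (pd 0 (gaussMap x) u)] at hs ⊢
  generalize dot3 (pd 0 (gaussMap x) u) (pd 0 (gaussMap x) u) = e11 at *
  generalize dot3 (pd 0 (gaussMap x) u) (pd 1 (gaussMap x) u) = e12 at *
  generalize dot3 (pd 1 (gaussMap x) u) (pd 1 (gaussMap x) u) = e22 at *
  ext k
  simp
  linear_combination (pd 1 (gaussMap x) u k) * hs

lemma A2 (h : Reg x u) :
    (Dd x u)⁻¹ • (dot3 (pd 0 (gaussMap x) u) (pd 0 (gaussMap x) u) • pd 1 x u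
      - dot3 (pd 0 (gaussMap x) u) (pd 1 (gaussMap x) u) • pd 0 x u) =
    -(Ph x u • crossProduct (gaussMap x u) (pd 0 (gaussMap x) u)
      + crossProduct (gaussMap x u) (pd 0 x u)) := by
  obtain ⟨α, β, γ, δ, h1, h2, h3⟩ := h.expand
  have hs := h.sym
  rw [inv_smul_eq_iff₀ h.D0, smul_neg, smul_add, smul_comm, csmul_cross (Dd x u), csmul_cross (Dd x u), ← h.NN, cross_cross_left, cross_cross_left, h3, h1, h2]
  rw [h1, h2] at hs
  simp only [dot3_add_left, dot3_add_right, dot3_smul_left, dot3_smul_right,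
    dot3_comm (pd 1 (gaussMap x) u) (pd 0 (gaussMap x) u)] at hs ⊢
  generalize dot3 (pd 0 (gaussMap x) u) (pd 0 (gaussMap x) u) = e11 at *
  generalize dot3 (pd 0 (gaussMap x) u) (pd 1 (gaussMap x) u) = e12 at *
  generalize dot3 (pd 1 (gaussMap x) u) (pd 1 (gaussMap x) u) = e22 at *
  ext k
  simp
  linear_combination (-pd 0 (gaussMap x) u k) * hs

end Reg

lemma fIII_sm {x : Param → Vec3} {u : Param} (h : Reg x u) (i j : Fin 2) :
    Sm (fun v => fformIII x v i j) u := by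
  simp only [fformIII, Matrix.of_apply]
  exact sm_dot (sm_pd h.smn i) (sm_pd h.smn j)

lemma beltrami_formula {x : Param → Vec3} {u : Param} (hev : ∀ᶠ v in nhds u, Reg x v) :
    beltrami2 (fformIII x) x u = -((Dd x u)⁻¹ •
      (pds 0 (Ph x) u • crossProduct (gaussMap x u) (pd 1 (gaussMap x) u)
      - pds 1 (Ph x) u • crossProduct (gaussMap x u) (pd 0 (gaussMap x) u)
      + Ph x u • crossProduct (pd 0 (gaussMap x) u) (pd 1 (gaussMap x) u))) := by
  have h : Reg x u := hev.self_of_nhds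
  obtain ⟨s, hs0, hs⟩ : ∃ s : ℝ, s ≠ 0 ∧ ∀ᶠ v in nhds u, |Dd x v| = s * Dd x v := by
    have hc : ContinuousAt (Dd x) u := h.smD.continuousAt
    rcases lt_or_gt_of_ne h.D0 with h0 | h0
    · refine ⟨-1, by norm_num, (hc.eventually (gt_mem_nhds h0)).mono fun v hv => ?_⟩
      rw [abs_of_neg hv]; ring
    · refine ⟨1, by norm_num, (hc.eventually (lt_mem_nhds h0)).mono fun v hv => ?_⟩
      rw [abs_of_pos hv]; ring
  have hsq : ∀ᶠ v in nhds u, Real.sqrt |(fformIII x v).det| = s * Dd x v := by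
    filter_upwards [hev, hs] with v hv hsv
    rw [hv.detE, abs_of_nonneg (sq_nonneg _), Real.sqrt_sq_eq_abs, hsv]
  have hcoef : ∀ i j, ∀ᶠ v in nhds u, (Real.sqrt |(fformIII x v).det| * (fformIII x v)⁻¹ i j) •
      pd j x v = s • (((Dd x v)⁻¹ * (fformIII x v).adjugate i j) • pd j x v) := by
    intro i j
    filter_upwards [hev, hsq] with v hv hsv
    rw [hsv, Matrix.inv_def, Ring.inverse_eq_inv', hv.detE, Matrix.smul_apply, smul_eq_mul,
      smul_smul]
    congr 1
    have := hv.D0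
    field_simp
  have hadj : ∀ i j, Sm (fun v => (fformIII x v).adjugate i j) u := by
    intro i j
    simp only [Matrix.adjugate_fin_two]
    fin_cases i <;> fin_cases j <;> simp
    · exact fIII_sm h 1 1
    · exact (fIII_sm h 0 1).neg
    · exact (fIII_sm h 1 0).neg
    · exact fIII_sm h 0 0
  have hsm : ∀ i j, Sm (fun v => ((Dd x v)⁻¹ * (fformIII x v).adjugate i j) • pd j x v) u :=
    fun i j => ((h.smD.inv h.D0).mul (hadj i j)).smul (sm_pd h.smx j)
  have hn0 := sm_pd h.smn 0
  have hn1 := sm_pd h.smn 1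
  have hx0 := sm_pd h.smx 0
  have hx1 := sm_pd h.smx 1
  have hP0 : Sm (fun v => Ph x v • crossProduct (gaussMap x v) (pd 0 (gaussMap x) v)) u :=
    ContDiffAt.smul h.smPh (sm_cross h.smn hn0)
  have hP1 : Sm (fun v => Ph x v • crossProduct (gaussMap x v) (pd 1 (gaussMap x) v)) u :=
    ContDiffAt.smul h.smPh (sm_cross h.smn hn1)
  have hQ : Sm (fun v => Ph x v • crossProduct (gaussMap x v) (pd 0 (gaussMap x) v)
      + crossProduct (gaussMap x v) (pd 0 x v)) u :=
    ContDiffAt.add hP0 (sm_cross h.smn hx0)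
  have B1 : pd 0 (fun v => ((Dd x v)⁻¹ * (fformIII x v).adjugate 0 0) • pd 0 x v
      + ((Dd x v)⁻¹ * (fformIII x v).adjugate 0 1) • pd 1 x v) u =
      pds 0 (Ph x) u • crossProduct (gaussMap x u) (pd 1 (gaussMap x) u) +
      Ph x u • (crossProduct (pd 0 (gaussMap x) u) (pd 1 (gaussMap x) u) +
        crossProduct (gaussMap x u) (pd 0 (pd 1 (gaussMap x)) u)) +
      (crossProduct (pd 0 (gaussMap x) u) (pd 1 x u) +
        crossProduct (gaussMap x u) (pd 0 (pd 1 x) u)) := by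
    rw [← pd_cross h.smn hn1, ← pd_cross h.smn hx1, ← pd_smul h.smPh (sm_cross h.smn hn1),
      ← pd_add hP1 (sm_cross h.smn hx1)]
    apply pd_congr
    filter_upwards [hev] with v hv
    rw [← hv.A1]
    simp only [Matrix.adjugate_fin_two, fformIII, Matrix.of_apply]
    ext k
    simp
    ring
  have B2 : pd 1 (fun v => ((Dd x v)⁻¹ * (fformIII x v).adjugate 1 0) • pd 0 x v
      + ((Dd x v)⁻¹ * (fformIII x v).adjugate 1 1) • pd 1 x v) u =
      (-1 : ℝ) • (pds 1 (Ph x) u • crossProduct (gaussMap x u) (pd 0 (gaussMap x) u) +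
      Ph x u • (crossProduct (pd 1 (gaussMap x) u) (pd 0 (gaussMap x) u) +
        crossProduct (gaussMap x u) (pd 1 (pd 0 (gaussMap x)) u)) +
      (crossProduct (pd 1 (gaussMap x) u) (pd 0 x u) +
        crossProduct (gaussMap x u) (pd 1 (pd 0 x) u))) := by
    rw [← pd_cross h.smn hn0, ← pd_cross h.smn hx0, ← pd_smul h.smPh (sm_cross h.smn hn0),
      ← pd_add hP0 (sm_cross h.smn hx0),
      ← pd_csmul _ hQ]
    apply pd_congr
    filter_upwards [hev] with v hv
    rw [neg_one_smul, ← hv.A2]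
    simp only [Matrix.adjugate_fin_two, fformIII, Matrix.of_apply,
      dot3_comm (pd 1 (gaussMap x) v) (pd 0 (gaussMap x) v)]
    ext k
    simp
    ring
  have hX : crossProduct (pd 0 (gaussMap x) u) (pd 1 x u) -
      crossProduct (pd 1 (gaussMap x) u) (pd 0 x u) =
      (-Ph x u) • crossProduct (pd 0 (gaussMap x) u) (pd 1 (gaussMap x) u) := by
    obtain ⟨α, β, γ, δ, h1, h2, h3⟩ := h.expand
    rw [h1, h2, h3]
    apply vext <;> simp [cross_eq] <;> ring
  have hX' := sub_eq_iff_eq_add.1 hX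
  unfold beltrami2
  simp only [Fin.sum_univ_two]
  simp only [fun i j k => pd_congr (hcoef i j) k, pd_csmul s (hsm _ _)]
  rw [← smul_add, ← pd_add (hsm 0 0) (hsm 0 1), ← smul_add, ← pd_add (hsm 1 0) (hsm 1 1),
    ← smul_add, B1, B2, hsq.self_of_nhds, pd_symm h.smn 1 0, pd_symm h.smx 1 0, hX', smul_smul]
  have : (s * Dd x u)⁻¹ * s = (Dd x u)⁻¹ := by
    have := h.D0
    field_simp
  rw [this]
  congr 2
  rw [← cross_anticomm (pd 0 (gaussMap x) u) (pd 1 (gaussMap x) u)]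
  module

lemma vec_zero_of {n a b y : Vec3} (hn : dot3 n n = 1) (ha : dot3 a n = 0) (hb : dot3 b n = 0)
    (hD : dot3 (crossProduct a b) n ≠ 0)
    (h0 : dot3 y a = 0) (h1 : dot3 y b = 0) : y = dot3 y n • n := by
  have hz : dot3 (y - dot3 y n • n) n = 0 := by
    rw [sub_eq_add_neg, ← neg_smul, dot3_add_left, dot3_smul_left, hn]; ring
  obtain ⟨p, q, h⟩ := tangent_expand hn ha hb hz hD
  have : dot3 (y - dot3 y n • n) (y - dot3 y n • n) = 0 := by
    nth_rewrite 2 [h]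
    rw [sub_eq_add_neg, ← neg_smul, dot3_add_right, dot3_smul_right, dot3_smul_right,
      dot3_add_left, dot3_add_left, dot3_smul_left, dot3_smul_left, h0, h1, dot3_comm n a,
      dot3_comm n b, ha, hb]
    ring
  exact sub_eq_zero.1 (dot3_self_eq_zero this)

lemma forward {U : Set Param} {x : Param → Vec3} (hU : IsOpen U) (hc : IsConnected U)
    (hR : ∀ u ∈ U, Reg x u) {lam : ℝ}
    (hl : ∀ u ∈ U, beltrami2 (fformIII x) x u = lam • x u) (hlam : lam ≠ 0) :
    (∃ c, ∀ u ∈ U, Ph x u = c) ∧ ∀ u ∈ U, lam • x u = (- Ph x u) • gaussMap x u := by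
  have hev : ∀ u ∈ U, ∀ᶠ v in nhds u, v ∈ U := fun u hu => hU.mem_nhds hu
  have hform : ∀ u ∈ U, lam • x u = _ := fun u hu =>
    (hl u hu).symm.trans (beltrami_formula ((hev u hu).mono fun v hv => hR v hv))
  have hdn : ∀ u ∈ U, lam * dot3 (x u) (gaussMap x u) = - Ph x u := by
    intro u hu
    have h := hR u hu
    have h1 := congrArg (fun y => dot3 y (gaussMap x u)) (hform u hu)
    simp only [dot3_smul_left] at h1
    have hD := h.D0
    rw [h1, ← neg_smul, dot3_smul_left, neg_mul, ← mul_neg, inv_mul_eq_iff_eq_mul₀ hD]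
    simp [Dd, dot3_eq, cross_eq]
    ring
  have hd0 : ∀ u ∈ U, lam * dot3 (x u) (pd 0 (gaussMap x) u) = pds 0 (Ph x) u := by
    intro u hu
    have h := hR u hu
    have h1 := congrArg (fun y => dot3 y (pd 0 (gaussMap x) u)) (hform u hu)
    simp only [dot3_smul_left] at h1
    have hD := h.D0
    rw [h1, ← neg_smul, dot3_smul_left, neg_mul, ← mul_neg, inv_mul_eq_iff_eq_mul₀ hD]
    simp [Dd, dot3_eq, cross_eq]
    ring
  have hd1 : ∀ u ∈ U, lam * dot3 (x u) (pd 1 (gaussMap x) u) = pds 1 (Ph x) u := by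
    intro u hu
    have h := hR u hu
    have h1 := congrArg (fun y => dot3 y (pd 1 (gaussMap x) u)) (hform u hu)
    simp only [dot3_smul_left] at h1
    have hD := h.D0
    rw [h1, ← neg_smul, dot3_smul_left, neg_mul, ← mul_neg, inv_mul_eq_iff_eq_mul₀ hD]
    simp [Dd, dot3_eq, cross_eq]
    ring
  have hdd : ∀ u ∈ U, ∀ i, lam * dot3 (x u) (pd i (gaussMap x) u) = - pds i (Ph x) u := by
    intro u hu i
    have h := hR u hu
    have e : Ph x =ᶠ[nhds u] fun v => (-lam) * dot3 (x v) (gaussMap x v) :=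
      (hev u hu).mono fun v hv => by have := hdn v hv; simp only; linarith
    rw [pds_congr e, pds_mul contDiffAt_const (sm_dot h.smx h.smn), pds_const,
      pds_dot h.smx h.smn, h.Xn]
    ring
  have hz : ∀ u ∈ U, ∀ i, pds i (Ph x) u = 0 := by
    intro u hu i
    have h1 := hdd u hu i
    fin_cases i
    · have := hd0 u hu
      simp at h1 ⊢
      linarith
    · have := hd1 u hu
      simp at h1 ⊢
      linarith
  refine ⟨const_of_pds hU hc (fun u hu => (hR u hu).smPh) hz, fun u hu => ?_⟩
  have h := hR u hu
  have hx0 : ∀ i, dot3 (x u) (pd i (gaussMap x) u) = 0 := fun i => by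
    have := hdd u hu i
    rw [hz u hu i, neg_zero] at this
    exact (mul_eq_zero.1 this).resolve_left hlam
  rw [← hdn u hu, mul_smul, ← vec_zero_of h.nn (h.Nn 0) (h.Nn 1) h.D0 (hx0 0) (hx0 1)]

lemma backward {U : Set Param} {x : Param → Vec3} (hU : IsOpen U) (hc : IsConnected U)
    (hR : ∀ u ∈ U, Reg x u) {r : ℝ} (hr : ∀ u ∈ U, norm3 (x u) = r) :
    ∀ u ∈ U, beltrami2 (fformIII x) x u = (2 : ℝ) • x u := by
  have hev : ∀ u ∈ U, ∀ᶠ v in nhds u, v ∈ U := fun u hu => hU.mem_nhds hu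
  have hxX : ∀ u ∈ U, ∀ i, dot3 (x u) (pd i x u) = 0 := by
    intro u hu i
    have h1 := pds_dot (hR u hu).smx (hR u hu).smx i
    rw [pds_congr (g := fun _ => r ^ 2) ((hev u hu).mono fun v hv => by
      simp only
      rw [← hr v hv, norm3, Real.sq_sqrt (dot3_self_nonneg _)]), pds_const,
      dot3_comm (pd i x u)] at h1
    linarith
  have hxn : ∀ u ∈ U, x u = dot3 (x u) (gaussMap x u) • gaussMap x u := fun u hu =>
    vec_zero_of (hR u hu).nn ((hR u hu).Xn 0) ((hR u hu).Xn 1) (hR u hu).G0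
      (hxX u hu 0) (hxX u hu 1)
  obtain ⟨c, hcst⟩ := const_of_pds (f := fun v => dot3 (x v) (gaussMap x v)) hU hc
    (fun u hu => sm_dot (hR u hu).smx (hR u hu).smn) (by
      intro u hu i
      rw [pds_dot (hR u hu).smx (hR u hu).smn, (hR u hu).Xn, hxn u hu, dot3_smul_left,
        dot3_comm (gaussMap x u) (pd i _ u), (hR u hu).Nn]
      simp)
  have hxc : ∀ u ∈ U, x u = c • gaussMap x u := fun u hu => by
    rw [← hcst u hu]; exact hxn u hu
  have hX : ∀ u ∈ U, ∀ i, pd i x u = c • pd i (gaussMap x) u := fun u hu i => by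
    rw [← pd_csmul c (hR u hu).smn]
    exact pd_congr ((hev u hu).mono hxc) i
  have hPh : ∀ u ∈ U, Ph x u = -2 * c := fun u hu => by
    have := (hR u hu).D0
    unfold Ph
    rw [← div_eq_mul_inv, div_eq_iff this, hX u hu, hX u hu]
    simp [Dd, dot3_eq, cross_eq]
    ring
  intro u hu
  have hp : ∀ i, pds i (Ph x) u = 0 := fun i => by
    rw [pds_congr ((hev u hu).mono hPh), pds_const]
  rw [beltrami_formula ((hev u hu).mono fun v hv => hR v hv), hp, hp, hPh u hu, (hR u hu).NN,
    hxc u hu]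
  have := (hR u hu).D0
  ext k
  simp
  field_simp

/-- Theorem 3.3: `Δ^{III} x = λ x` on `U` for some `λ ≠ 0` iff `M` is part
of a sphere centered at the origin; moreover in that case `H/K` is constant on `U` and
`λ x = −2(H/K) n`. -/
theorem stmt14 (U : Set Param) (x : Param → Vec3)
    (hU : IsOpen U) (hUconn : IsConnected U)
    (hx : ContDiffOn ℝ (⊤ : ℕ∞) x U) (himm : Immersed x U)
    (hpar : ∀ u ∈ U, (fformII x u).det ≠ 0) :
    ((∃ lam : ℝ, lam ≠ 0 ∧ ∀ u ∈ U, beltrami2 (fformIII x) x u = lam • x u) ↔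
      (∃ r : ℝ, 0 < r ∧ ∀ u ∈ U, norm3 (x u) = r)) ∧
    (∀ lam : ℝ, lam ≠ 0 → (∀ u ∈ U, beltrami2 (fformIII x) x u = lam • x u) →
      (∃ μ : ℝ, ∀ u ∈ U, meanCurv x u / gaussCurv x u = μ) ∧
      (∀ u ∈ U, lam • x u =
        (-(2 * (meanCurv x u / gaussCurv x u))) • gaussMap x u)) := by
  have hR : ∀ u ∈ U, Reg x u := fun u hu => reg_of hU hx himm hpar hu
  obtain ⟨u0, hu0⟩ := hUconn.nonempty
  refine ⟨⟨?_, ?_⟩, ?_⟩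
  · rintro ⟨lam, hlam, hl⟩
    obtain ⟨⟨c, hc⟩, hxn⟩ := forward hU hUconn hR hl hlam
    have hx' : ∀ u ∈ U, x u = (lam⁻¹ * -c) • gaussMap x u := fun u hu => by
      rw [mul_smul, ← hc u hu, ← hxn u hu, smul_smul, inv_mul_cancel₀ hlam, one_smul]
    have hnorm : ∀ u ∈ U, norm3 (x u) = |lam⁻¹ * -c| := fun u hu => by
      rw [norm3, hx' u hu, dot3_smul_left, dot3_smul_right, (hR u hu).nn, mul_one,
        Real.sqrt_mul_self_eq_abs]
    refine ⟨|lam⁻¹ * -c|, abs_pos.2 fun h0 => ?_, hnorm⟩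
    have hz : x =ᶠ[nhds u0] fun _ => 0 := by
      filter_upwards [hU.mem_nhds hu0] with v hv
      rw [hx' v hv, h0, zero_smul]
    apply (hR u0 hu0).G0
    have : pd 0 x u0 = 0 := by
      rw [pd_congr hz]; simp [pd]
    rw [this]
    simp [dot3]
  · rintro ⟨r, -, hr⟩
    exact ⟨2, two_ne_zero, backward hU hUconn hR hr⟩
  · intro lam hlam hl
    obtain ⟨⟨c, hc⟩, hxn⟩ := forward hU hUconn hR hl hlam
    refine ⟨⟨c / 2, fun u hu => ?_⟩, fun u hu => ?_⟩
    · have := (hR u hu).twoHK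
      rw [hc u hu] at this
      linarith
    · rw [(hR u hu).twoHK, hxn u hu]
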